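/- Let (H, U) be a Z2-graded Hilbert space and let A, B ⊆ B(H) be unital *-subalgebras with UAU = A and UBU = B. Suppose ξ ∈ H is a cyclic vector for A with Uξ = ξ, and A ⊆ B^≀. Then the following are equivalent: (1) A^≀ = B^≀≀; (2) η_U(A_s)ξ + iB_sξ is dense in H; (3) the real orthogonal complement of η_U(A_s)ξ equals the closure of iB_sξ. -/

import Mathlib

/-!
Conjugation by a square root of `U` implements the twist, so for `C = η_U(A)` the theorem becomes
the untwisted Rieffel–van Daele lemma for commuting `*`-algebras `C` and `B`, in which
`C_s ξ ⊥ i B_s ξ` for the real inner product and (2) ⇔ (3) is Hilbert space geometry.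

For (1) ⇒ (2), let `x` be real orthogonal to `C_s ξ` and to `i B_s ξ`. The vector states of
`x + ξ` and `x - ξ` agree on `C`, so some contraction `v ∈ C'` maps `x + ξ` to `x - ξ`. The vector
states of `x + iξ` and `x - iξ` agree on `B`, hence on `B'' = C'`; evaluating them at `v` shows that
`v` also maps `x - ξ` back to `x + ξ`. Thus `v ξ = -ξ`, so `v = -1` because `ξ` separates `C'`, and
`x = 0`. For (3) ⇒ (1), if `t ∈ C'` is self-adjoint, then `t ξ` is a limit of vectors `b ξ` with
`b ∈ B_s`, so that matrix elements show that `t` commutes with `B'`.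
-/

noncomputable section

open scoped InnerProductSpace ComplexOrder

/-- The even part `T₊ = (T + UTU)/2` and odd part `T₋ = (T - UTU)/2` of an operator on a
`ℤ₂`-graded Hilbert space `(H, U)`;  the *twist automorphism* is `η_U(T) = T₊ + i U T₋`. -/
def twist {H : Type*} [NormedAddCommGroup H] [InnerProductSpace ℂ H]
    (U : H →L[ℂ] H) (T : H →L[ℂ] H) : H →L[ℂ] H :=
  (2⁻¹ : ℂ) • (T + U * T * U) + ((2⁻¹ : ℂ) * Complex.I) • (U * (T - U * T * U))

/-- The *twisted commutant* `M^≀ = η_U(M')` of a set of operators on a `ℤ₂`-graded Hilbert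
space `(H, U)` (for `ad U`-invariant `M` this coincides with `η_U(M)'`). -/
def twistedComm {H : Type*} [NormedAddCommGroup H] [InnerProductSpace ℂ H]
    (U : H →L[ℂ] H) (M : Set (H →L[ℂ] H)) : Set (H →L[ℂ] H) :=
  twist U '' Set.centralizer M

section VectorStates

variable {𝕜 H : Type*} [RCLike 𝕜] [NormedAddCommGroup H] [InnerProductSpace 𝕜 H] [CompleteSpace H]
  {D : StarSubalgebra 𝕜 (H →L[𝕜] H)} {y z : H}

/-- The map `d ↦ d y` from a `*`-algebra `D` of operators to the orbit `D y` of a vector. The vector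
`y` is cyclic for `D` when this map has dense range. -/
def orbitMap (D : StarSubalgebra 𝕜 (H →L[𝕜] H)) (y : H) : D →ₗ[𝕜] H where
  toFun d := (d : H →L[𝕜] H) y
  map_add' _ _ := rfl
  map_smul' _ _ := rfl

@[simp]
theorem orbitMap_apply (d : D) : orbitMap D y d = (d : H →L[𝕜] H) y :=
  rfl

theorem apply_mem_orthogonal_range_orbitMap {c : H →L[𝕜] H} (hc : c ∈ D) {k : H}
    (hk : k ∈ (orbitMap D y).rangeᗮ) : c k ∈ (orbitMap D y).rangeᗮ := by
  refine ContinuousLinearMap.orthogonal_mem_invtSubmodule (T := c) ?_ hk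
  rintro _ ⟨d, rfl⟩
  exact ⟨⟨star c, star_mem hc⟩ * d, rfl⟩

theorem denseRange_orbitMap_coprod_orthogonal (D : StarSubalgebra 𝕜 (H →L[𝕜] H)) (y : H) :
    DenseRange ((orbitMap D y).coprod (orbitMap D y).rangeᗮ.subtype) := by
  rw [DenseRange, ← LinearMap.coe_range, LinearMap.range_coprod, Submodule.range_subtype,
    Submodule.dense_iff_topologicalClosure_eq_top, Submodule.topologicalClosure_eq_top_iff,
    ← Submodule.inf_orthogonal, Submodule.inf_orthogonal_eq_bot]

theorem exists_mem_centralizer_apply_eq (h : ∀ d ∈ D, ‖d z‖ ≤ ‖d y‖) :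
    ∃ v ∈ Set.centralizer (D : Set (H →L[𝕜] H)), ‖v‖ ≤ 1 ∧ v y = z := by
  let e := (orbitMap D y).coprod (orbitMap D y).rangeᗮ.subtype
  let f := orbitMap D z ∘ₗ LinearMap.fst 𝕜 D (orbitMap D y).rangeᗮ
  have he : DenseRange e := denseRange_orbitMap_coprod_orthogonal D y
  have hfe : ∀ p, ‖f p‖ ≤ 1 * ‖e p‖ := by
    rintro ⟨d, k⟩
    have pythagoras : ‖e (d, k)‖ * ‖e (d, k)‖ = ‖d.1 y‖ * ‖d.1 y‖ + ‖k.1‖ * ‖k.1‖ :=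
      norm_add_sq_eq_norm_sq_add_norm_sq_of_inner_eq_zero (𝕜 := 𝕜) _ _ (k.2 _ ⟨d, rfl⟩)
    rw [one_mul]
    refine (h d d.2).trans (le_of_sq_le_sq ?_ (norm_nonneg _))
    nlinarith [norm_nonneg k.1]
  let v := f.extendOfNorm e
  have hve (d : D) (k : (orbitMap D y).rangeᗮ) : v (d.1 y + k) = d.1 z :=
    LinearMap.extendOfNorm_eq he ⟨1, hfe⟩ (d, k)
  refine ⟨v, fun c hc ↦ ?_, LinearMap.opNorm_extendOfNorm_le he zero_le_one hfe,
    by simpa using hve 1 0⟩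
  refine DFunLike.coe_injective (he.equalizer (c * v).continuous (v * c).continuous ?_)
  ext ⟨d, k⟩
  have hck := hve (⟨c, hc⟩ * d) ⟨c k, apply_mem_orthogonal_range_orbitMap hc k.2⟩
  change c (v (d.1 y + k)) = v (c (d.1 y + k))
  rw [hve, map_add]
  exact hck.symm

theorem norm_apply_eq_of_inner_apply_eq (h : ∀ d ∈ D, inner 𝕜 y (d y) = inner 𝕜 z (d z))
    {d : H →L[𝕜] H} (hd : d ∈ D) : ‖d y‖ = ‖d z‖ := by
  rw [← sq_eq_sq₀ (norm_nonneg _) (norm_nonneg _), ← inner_self_eq_norm_sq (𝕜 := 𝕜),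
    ← inner_self_eq_norm_sq (𝕜 := 𝕜), ← d.adjoint_inner_right, ← d.adjoint_inner_right]
  exact congrArg RCLike.re (h (star d * d) (mul_mem (star_mem hd) hd))

theorem adjoint_apply_apply_of_norm_apply_eq {v : H →L[𝕜] H} (hv : ‖v‖ ≤ 1) (hy : ‖v y‖ = ‖y‖) :
    ContinuousLinearMap.adjoint v (v y) = y := by
  refine eq_of_norm_le_re_inner_eq_norm_sq (𝕜 := 𝕜) ?_ ?_
  · rw [← LinearIsometryEquiv.norm_map ContinuousLinearMap.adjoint] at hv
    simpa [hy] using ContinuousLinearMap.le_of_opNorm_le _ hv (v y)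
  · rw [ContinuousLinearMap.adjoint_inner_left, inner_self_eq_norm_sq, hy]

theorem inner_apply_eq_of_mem_bicommutant
    (h : ∀ d ∈ D, inner 𝕜 y (d y) = inner 𝕜 z (d z)) {b : H →L[𝕜] H}
    (hb : b ∈ Set.centralizer (Set.centralizer (D : Set (H →L[𝕜] H)))) :
    inner 𝕜 y (b y) = inner 𝕜 z (b z) := by
  obtain ⟨v, hvD, hv, rfl⟩ :=
    exists_mem_centralizer_apply_eq fun d hd ↦ (norm_apply_eq_of_inner_apply_eq h hd).ge
  have hnorm : ‖v y‖ = ‖y‖ := (norm_apply_eq_of_inner_apply_eq h (one_mem D)).symm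
  have hvb : v (b y) = b (v y) := DFunLike.congr_fun (hb v hvD) y
  rw [← hvb, ← ContinuousLinearMap.adjoint_inner_left v,
    adjoint_apply_apply_of_norm_apply_eq hv hnorm]

end VectorStates

section RieffelVanDaele

variable {H : Type*} [NormedAddCommGroup H] [InnerProductSpace ℂ H] [CompleteSpace H]

attribute [local instance] InnerProductSpace.complexToReal

theorem eqOn_starSubalgebra_of_isSelfAdjoint {A M : Type*} [Ring A] [StarRing A] [Algebra ℂ A]
    [StarModule ℂ A] [AddCommGroup M] [Module ℂ M] {D : StarSubalgebra ℂ A} {f g : A →ₗ[ℂ] M}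
    (h : ∀ d ∈ D, IsSelfAdjoint d → f d = g d) : Set.EqOn f g D := by
  let i : D →ₗ[ℂ] A := D.subtype.toAlgHom.toLinearMap
  have hfg : f ∘ₗ i = g ∘ₗ i :=
    LinearMap.ext_on span_selfAdjoint fun c hc ↦ h c c.2 (congrArg Subtype.val hc)
  exact fun d hd ↦ LinearMap.congr_fun hfg ⟨d, hd⟩

/-- The real subspace `D_s ξ`, where `D_s` is the self-adjoint part of `D`. Since operators are
complex linear, `i D_s ξ` is `selfAdjointOrbit D (Complex.I • ξ)`. -/
def selfAdjointOrbit (D : StarSubalgebra ℂ (H →L[ℂ] H)) (ξ : H) : Submodule ℝ H :=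
  (D.toSubalgebra.toSubmodule.restrictScalars ℝ ⊓ selfAdjoint.submodule ℝ (H →L[ℂ] H)).map
    ((ContinuousLinearMap.apply ℂ H ξ).toLinearMap.restrictScalars ℝ)

variable {B C D : StarSubalgebra ℂ (H →L[ℂ] H)} {ξ x z : H}

theorem mem_selfAdjointOrbit : z ∈ selfAdjointOrbit D ξ ↔ ∃ T ∈ D, IsSelfAdjoint T ∧ z = T ξ := by
  constructor
  · rintro ⟨T, ⟨hT, hTs⟩, rfl⟩
    exact ⟨T, hT, hTs, rfl⟩
  · rintro ⟨T, hT, hTs, rfl⟩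
    exact ⟨T, ⟨hT, hTs⟩, rfl⟩

theorem mem_orthogonal_selfAdjointOrbit :
    x ∈ (selfAdjointOrbit D ξ)ᗮ ↔ ∀ T ∈ D, IsSelfAdjoint T → (⟪x, T ξ⟫_ℂ).re = 0 := by
  rw [Submodule.mem_orthogonal']
  constructor
  · exact fun hx T hT hTs ↦ hx _ (mem_selfAdjointOrbit.2 ⟨T, hT, hTs, rfl⟩)
  · rintro hx _ hu
    obtain ⟨T, hT, hTs, rfl⟩ := mem_selfAdjointOrbit.1 hu
    exact hx T hT hTs

theorem inner_add_apply_add_eq_inner_sub_apply_sub (hx : x ∈ (selfAdjointOrbit D ξ)ᗮ)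
    {d : H →L[ℂ] H} (hd : d ∈ D) : ⟪x + ξ, d (x + ξ)⟫_ℂ = ⟪x - ξ, d (x - ξ)⟫_ℂ := by
  let vectorState (y : H) : (H →L[ℂ] H) →ₗ[ℂ] ℂ :=
    (innerSL ℂ y ∘L ContinuousLinearMap.apply ℂ H y).toLinearMap
  refine eqOn_starSubalgebra_of_isSelfAdjoint (f := vectorState (x + ξ))
    (g := vectorState (x - ξ)) (fun c hc hcs ↦ ?_) hd
  have hre : ⟪x, c ξ⟫_ℂ + ⟪ξ, c x⟫_ℂ = 0 := by
    have hsymm : ⟪ξ, c x⟫_ℂ = starRingEnd ℂ ⟪x, c ξ⟫_ℂ := by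
      rw [inner_conj_symm]
      exact (hcs.isSymmetric ξ x).symm
    rw [hsymm, Complex.add_conj, mem_orthogonal_selfAdjointOrbit.1 hx c hc hcs]
    simp
  change ⟪x + ξ, c (x + ξ)⟫_ℂ = ⟪x - ξ, c (x - ξ)⟫_ℂ
  simp only [map_add, map_sub, inner_add_left, inner_add_right, inner_sub_left, inner_sub_right]
  linear_combination 2 * hre

theorem apply_I_smul_mem_orthogonal_selfAdjointOrbit {t : H →L[ℂ] H}
    (ht : t ∈ Set.centralizer (C : Set (H →L[ℂ] H))) (hts : IsSelfAdjoint t) :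
    t (Complex.I • ξ) ∈ (selfAdjointOrbit C ξ)ᗮ := by
  refine mem_orthogonal_selfAdjointOrbit.2 fun c hc hcs ↦ ?_
  have hct : c (t ξ) = t (c ξ) := DFunLike.congr_fun (ht c hc) ξ
  have hreal : starRingEnd ℂ ⟪t ξ, c ξ⟫_ℂ = ⟪t ξ, c ξ⟫_ℂ := by
    rw [inner_conj_symm]
    calc ⟪c ξ, t ξ⟫_ℂ = ⟪ξ, c (t ξ)⟫_ℂ := hcs.isSymmetric ξ (t ξ)
      _ = ⟪ξ, t (c ξ)⟫_ℂ := by rw [hct]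
      _ = ⟪t ξ, c ξ⟫_ℂ := (hts.isSymmetric ξ (c ξ)).symm
  rw [map_smul, inner_smul_left]
  simp [Complex.conj_eq_iff_im.1 hreal]

theorem dense_sup_iff_orthogonal_eq_topologicalClosure {𝕜 E : Type*} [RCLike 𝕜]
    [NormedAddCommGroup E] [InnerProductSpace 𝕜 E] [CompleteSpace E] {K L : Submodule 𝕜 E}
    (h : L ≤ Kᗮ) : Dense ((K ⊔ L : Submodule 𝕜 E) : Set E) ↔ Kᗮ = L.topologicalClosure := by
  rw [Submodule.dense_iff_topologicalClosure_eq_top, Submodule.topologicalClosure_eq_top_iff,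
    ← Submodule.inf_orthogonal, ← Submodule.orthogonal_orthogonal_eq_closure]
  constructor
  · intro hbot
    have hle : Lᗮᗮ ≤ Kᗮ := by
      rw [Submodule.orthogonal_orthogonal_eq_closure]
      exact L.topologicalClosure_minimal h K.isClosed_orthogonal
    rw [← Submodule.sup_orthogonal_inf_of_hasOrthogonalProjection hle,
      Submodule.triorthogonal_eq_orthogonal, inf_comm, hbot, sup_bot_eq]
  · intro hK
    rw [hK, inf_comm, Submodule.inf_orthogonal_eq_bot]

theorem eq_zero_of_mem_centralizer {v : H →L[ℂ] H} (hξ : DenseRange (orbitMap C ξ))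
    (hv : v ∈ Set.centralizer (C : Set (H →L[ℂ] H))) (hvξ : v ξ = 0) : v = 0 := by
  refine DFunLike.coe_injective (hξ.equalizer v.continuous continuous_zero ?_)
  ext c
  have hcv : c.1 (v ξ) = v (c.1 ξ) := DFunLike.congr_fun (hv c c.2) ξ
  simpa [hvξ] using hcv.symm

theorem eq_zero_of_mem_orthogonal_selfAdjointOrbit (hξ : DenseRange (orbitMap C ξ))
    (hCB : Set.centralizer (C : Set (H →L[ℂ] H)) ⊆
      Set.centralizer (Set.centralizer (B : Set (H →L[ℂ] H))))
    (hxC : x ∈ (selfAdjointOrbit C ξ)ᗮ) (hxB : x ∈ (selfAdjointOrbit B (Complex.I • ξ))ᗮ) :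
    x = 0 := by
  have hstate (c) (hc : c ∈ C) := inner_add_apply_add_eq_inner_sub_apply_sub hxC hc
  obtain ⟨v, hvC, hv, hvx⟩ :=
    exists_mem_centralizer_apply_eq fun c hc ↦ (norm_apply_eq_of_inner_apply_eq hstate hc).ge
  have hnorm : ‖x + ξ‖ = ‖x - ξ‖ := norm_apply_eq_of_inner_apply_eq hstate (one_mem C)
  have hinner : ⟪x + ξ, v (x - ξ)⟫_ℂ = ⟪x - ξ, v (x + ξ)⟫_ℂ := by
    have hvB := inner_apply_eq_of_mem_bicommutant
      (fun b hb ↦ inner_add_apply_add_eq_inner_sub_apply_sub hxB hb) (hCB hvC)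
    simp only [map_add, map_sub, map_smul, inner_add_left, inner_add_right, inner_sub_left,
      inner_sub_right, inner_smul_left, inner_smul_right, Complex.conj_I] at hvB ⊢
    linear_combination Complex.I * hvB +
      -2 * (⟪x, v ξ⟫_ℂ - ⟪ξ, v x⟫_ℂ) * Complex.I_mul_I
  have hvx' : v (x - ξ) = x + ξ := by
    refine eq_of_norm_le_re_inner_eq_norm_sq (𝕜 := ℂ) ?_ ?_
    · simpa [hnorm] using v.le_of_opNorm_le hv (x - ξ)
    · rw [inner_re_symm, hinner, hvx, inner_self_eq_norm_sq, hnorm]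
  have hvξ : v ξ = -ξ :=
    calc v ξ = v ((2⁻¹ : ℂ) • ((x + ξ) - (x - ξ))) := by congr 1; module
      _ = (2⁻¹ : ℂ) • ((x - ξ) - (x + ξ)) := by rw [map_smul, map_sub, hvx, hvx']
      _ = -ξ := by module
  have hv_add_one : v + 1 = 0 :=
    eq_zero_of_mem_centralizer hξ (Set.add_mem_centralizer hvC Set.one_mem_centralizer)
      (by simp [hvξ])
  have hx : -(x + ξ) = x - ξ := by rw [← hvx, eq_neg_of_add_eq_zero_left hv_add_one]; rfl
  calc x = (2⁻¹ : ℂ) • ((x - ξ) - -(x + ξ)) := by module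
    _ = 0 := by rw [hx, sub_self, smul_zero]

theorem inner_apply_eq_inner_apply_of_mem_closure {a d : H →L[ℂ] H}
    (ha : a ∈ Set.centralizer (B : Set (H →L[ℂ] H)))
    (hd : d ∈ Set.centralizer (B : Set (H →L[ℂ] H)))
    (hz : z ∈ (selfAdjointOrbit B ξ).topologicalClosure) : ⟪a z, d ξ⟫_ℂ = ⟪a ξ, d z⟫_ℂ := by
  have hclosed : IsClosed {z | ⟪a z, d ξ⟫_ℂ = ⟪a ξ, d z⟫_ℂ} :=
    isClosed_eq (by fun_prop) (by fun_prop)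
  refine closure_minimal (fun u hu ↦ ?_) hclosed hz
  obtain ⟨b, hb, hbs, rfl⟩ := mem_selfAdjointOrbit.1 hu
  have hab : b (a ξ) = a (b ξ) := DFunLike.congr_fun (ha b hb) ξ
  have hdb : b (d ξ) = d (b ξ) := DFunLike.congr_fun (hd b hb) ξ
  change ⟪a (b ξ), d ξ⟫_ℂ = ⟪a ξ, d (b ξ)⟫_ℂ
  rw [← hab, ← hdb]
  exact hbs.isSymmetric _ _

theorem mul_comm_of_apply_mem_closure {s t : H →L[ℂ] H} (hξ : DenseRange (orbitMap C ξ))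
    (hCB : (C : Set (H →L[ℂ] H)) ⊆ Set.centralizer (B : Set (H →L[ℂ] H)))
    (ht : t ∈ Set.centralizer (C : Set (H →L[ℂ] H))) (hts : IsSelfAdjoint t)
    (htξ : t (Complex.I • ξ) ∈ (selfAdjointOrbit B (Complex.I • ξ)).topologicalClosure)
    (hs : s ∈ Set.centralizer (B : Set (H →L[ℂ] H))) : s * t = t * s := by
  have htC (c) (hc : c ∈ C) : c (t ξ) = t (c ξ) := DFunLike.congr_fun (ht c hc) ξ
  refine DFunLike.coe_injective (hξ.equalizer (s * t).continuous (t * s).continuous ?_)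
  ext c
  refine hξ.eq_of_inner_left ℂ fun d ↦ ?_
  have hst : ⟪s (c.1 (t ξ)), d.1 ξ⟫_ℂ = ⟪s (c.1 ξ), d.1 (t ξ)⟫_ℂ := by
    have hI := inner_apply_eq_inner_apply_of_mem_closure
      (Set.mul_mem_centralizer hs (hCB c.2)) (hCB d.2) htξ
    simpa [inner_smul_left, inner_smul_right] using hI
  calc ⟪s (t (c.1 ξ)), d.1 ξ⟫_ℂ = ⟪s (c.1 ξ), t (d.1 ξ)⟫_ℂ := by
        rw [← htC c c.2, hst, htC d d.2]
    _ = ⟪t (s (c.1 ξ)), d.1 ξ⟫_ℂ := (hts.isSymmetric _ _).symm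

theorem centralizer_subset_bicommutant (hξ : DenseRange (orbitMap C ξ))
    (hCB : (C : Set (H →L[ℂ] H)) ⊆ Set.centralizer (B : Set (H →L[ℂ] H)))
    (h : (selfAdjointOrbit C ξ)ᗮ = (selfAdjointOrbit B (Complex.I • ξ)).topologicalClosure) :
    Set.centralizer (C : Set (H →L[ℂ] H)) ⊆
      Set.centralizer (Set.centralizer (B : Set (H →L[ℂ] H))) := by
  intro t ht s hs
  have hC' : (StarSubalgebra.centralizer ℂ (C : Set (H →L[ℂ] H)) : Set (H →L[ℂ] H)) =
      Set.centralizer C := by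
    rw [StarSubalgebra.coe_centralizer, StarMemClass.star_coe_eq, Set.union_self]
  rw [← hC'] at ht
  refine eqOn_starSubalgebra_of_isSelfAdjoint (f := LinearMap.mulLeft ℂ s)
    (g := LinearMap.mulRight ℂ s) (fun r hr hrs ↦ ?_) ht
  rw [← SetLike.mem_coe, hC'] at hr
  exact mul_comm_of_apply_mem_closure hξ hCB hr hrs
    (h ▸ apply_I_smul_mem_orthogonal_selfAdjointOrbit hr hrs) hs

theorem rieffelVanDaele_tfae (hξ : DenseRange (orbitMap C ξ))
    (hCB : (C : Set (H →L[ℂ] H)) ⊆ Set.centralizer (B : Set (H →L[ℂ] H))) :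
    [Set.centralizer (C : Set (H →L[ℂ] H)) =
        Set.centralizer (Set.centralizer (B : Set (H →L[ℂ] H))),
      Dense ((selfAdjointOrbit C ξ ⊔ selfAdjointOrbit B (Complex.I • ξ) : Submodule ℝ H) : Set H),
      (selfAdjointOrbit C ξ)ᗮ = (selfAdjointOrbit B (Complex.I • ξ)).topologicalClosure].TFAE := by
  have hle : selfAdjointOrbit B (Complex.I • ξ) ≤ (selfAdjointOrbit C ξ)ᗮ := by
    intro u hu
    obtain ⟨b, hb, hbs, rfl⟩ := mem_selfAdjointOrbit.1 hu
    exact apply_I_smul_mem_orthogonal_selfAdjointOrbit (fun c hc ↦ (hCB hc b hb).symm) hbs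
  tfae_have 2 ↔ 3 := dense_sup_iff_orthogonal_eq_topologicalClosure hle
  tfae_have 3 → 1 := fun h ↦
    (centralizer_subset_bicommutant hξ hCB h).antisymm (Set.centralizer_subset hCB)
  tfae_have 1 → 2 := by
    intro h
    rw [Submodule.dense_iff_topologicalClosure_eq_top, Submodule.topologicalClosure_eq_top_iff,
      ← Submodule.inf_orthogonal, Submodule.eq_bot_iff]
    exact fun x hx ↦ eq_zero_of_mem_orthogonal_selfAdjointOrbit hξ h.subset hx.1 hx.2
  tfae_finish

end RieffelVanDaele

section Twist

theorem image_centralizer {F R S : Type*} [Mul R] [Mul S] [EquivLike F R S] [MulEquivClass F R S]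
    (e : F) (M : Set R) : e '' Set.centralizer M = Set.centralizer (e '' M) := by
  ext y
  obtain ⟨x, rfl⟩ := EquivLike.surjective e y
  simp only [(EquivLike.injective e).mem_set_image, Set.mem_centralizer_iff, Set.forall_mem_image,
    ← map_mul, (EquivLike.injective e).eq_iff]

/-- The square root `((1 - i) + (1 + i) u) / 2` of a self-adjoint unitary `u`, which is `1` on the
even and `-i` on the odd vectors of the grading defined by `u`. It implements the twist. -/
def gradingSqrt {A : Type*} [Ring A] [Algebra ℂ A] (u : A) : A :=
  (2⁻¹ : ℂ) • ((1 - Complex.I) • 1 + (1 + Complex.I) • u)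

section GradingSqrt

variable {A : Type*} [Ring A] [Algebra ℂ A] {u : A}

theorem gradingSqrt_mul_self (hu : u * u = 1) : gradingSqrt u * gradingSqrt u = u := by
  simp only [gradingSqrt, smul_mul_smul_comm, add_mul, mul_add, mul_one, one_mul, hu]
  match_scalars
  · linear_combination (1 / 2) * Complex.I_mul_I
  · linear_combination (-1 / 2) * Complex.I_mul_I

theorem commute_gradingSqrt (u : A) : Commute u (gradingSqrt u) :=
  (((Commute.one_right u).smul_right _).add_right ((Commute.refl u).smul_right _)).smul_right _

variable [StarRing A] [StarModule ℂ A]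

theorem star_gradingSqrt (hsa : star u = u) (hu : u * u = 1) :
    star (gradingSqrt u) = u * gradingSqrt u := by
  simp only [gradingSqrt, star_smul, star_add, star_sub, star_one, hsa, mul_smul_comm, mul_add,
    mul_one, hu, RCLike.star_def, map_inv₀, map_ofNat, Complex.conj_I]
  module

theorem gradingSqrt_mem_unitary (hsa : star u = u) (hu : u * u = 1) :
    gradingSqrt u ∈ unitary A := by
  rw [Unitary.mem_iff, star_gradingSqrt hsa hu, ← mul_assoc, ← (commute_gradingSqrt u).eq,
    mul_assoc, gradingSqrt_mul_self hu]
  exact ⟨hu, hu⟩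

end GradingSqrt

variable {H : Type*} [NormedAddCommGroup H] [InnerProductSpace ℂ H] {U : H →L[ℂ] H}

theorem twist_apply_eq_gradingSqrt_apply (hUunit : U * U = 1) {ξ : H} (hξ : U ξ = ξ)
    (T : H →L[ℂ] H) : twist U T ξ = gradingSqrt U (T ξ) := by
  have hUU : U (U (T ξ)) = T ξ := DFunLike.congr_fun hUunit (T ξ)
  change (2⁻¹ : ℂ) • (T ξ + U (T (U ξ))) + ((2⁻¹ : ℂ) * Complex.I) • U (T ξ - U (T (U ξ))) =
    (2⁻¹ : ℂ) • ((1 - Complex.I) • T ξ + (1 + Complex.I) • U (T ξ))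
  rw [hξ, map_sub, hUU]
  module

variable [CompleteSpace H]

/-- The twist `η_U` as a `*`-automorphism of `B(H)`. -/
def twistAut (hUsa : star U = U) (hUunit : U * U = 1) : (H →L[ℂ] H) ≃⋆ₐ[ℂ] (H →L[ℂ] H) :=
  Unitary.conjStarAlgAut ℂ (H →L[ℂ] H) ⟨gradingSqrt U, gradingSqrt_mem_unitary hUsa hUunit⟩

theorem coe_twistAut (hUsa : star U = U) (hUunit : U * U = 1) :
    ⇑(twistAut hUsa hUunit) = twist U := by
  ext1 T
  have hUUT : U * (U * T * U) = T * U := by rw [mul_assoc, ← mul_assoc, hUunit, one_mul]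
  have hUg : U * gradingSqrt U = (2⁻¹ : ℂ) • ((1 - Complex.I) • U + (1 + Complex.I) • 1) := by
    rw [gradingSqrt, mul_smul_comm, mul_add, mul_smul_comm, mul_smul_comm, mul_one, hUunit]
  change gradingSqrt U * T * star (gradingSqrt U) = twist U T
  rw [star_gradingSqrt hUsa hUunit, hUg]
  simp only [gradingSqrt, twist, mul_sub, hUUT, add_mul, mul_add, mul_one, one_mul,
    smul_mul_assoc, mul_smul_comm]
  match_scalars
  · linear_combination (1 / 4) * Complex.I_mul_I
  · linear_combination (-1 / 4) * Complex.I_mul_I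
  · linear_combination (-1 / 4) * Complex.I_mul_I
  · linear_combination (1 / 4) * Complex.I_mul_I

theorem twist_twist (hUsa : star U = U) (hUunit : U * U = 1) (T : H →L[ℂ] H) :
    twist U (twist U T) = U * T * U := by
  rw [← coe_twistAut hUsa hUunit, twistAut, ← Unitary.conjStarAlgAut_mul_apply,
    Unitary.conjStarAlgAut_apply]
  simp [gradingSqrt_mul_self hUunit, hUsa]

theorem isSelfAdjoint_twist_iff (hUsa : star U = U) (hUunit : U * U = 1) {T : H →L[ℂ] H} :
    IsSelfAdjoint (twist U T) ↔ IsSelfAdjoint T := by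
  have hstar : star (twist U T) = twist U (star T) := by
    rw [← coe_twistAut hUsa hUunit]
    exact ((twistAut hUsa hUunit).map_star' T).symm
  rw [IsSelfAdjoint, hstar, ← coe_twistAut hUsa hUunit,
    (EquivLike.injective (twistAut hUsa hUunit)).eq_iff, IsSelfAdjoint]

theorem dense_twist_apply (hUsa : star U = U) (hUunit : U * U = 1) {ξ : H} (hξ : U ξ = ξ)
    {M : Set (H →L[ℂ] H)} (hM : Dense ((fun T : H →L[ℂ] H ↦ T ξ) '' M)) :
    Dense ((fun T : H →L[ℂ] H ↦ twist U T ξ) '' M) := by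
  have hsurj : Function.Surjective (gradingSqrt U : H →L[ℂ] H) := fun y ↦
    ⟨(star (gradingSqrt U) : H →L[ℂ] H) y, DFunLike.congr_fun
      (Unitary.mul_star_self_of_mem (gradingSqrt_mem_unitary hUsa hUunit)) y⟩
  simp only [twist_apply_eq_gradingSqrt_apply hUunit hξ,
    ← Set.image_image (gradingSqrt U : H →L[ℂ] H) (fun T : H →L[ℂ] H ↦ T ξ)]
  exact hsurj.denseRange.dense_image (gradingSqrt U).continuous hM

theorem twistedComm_eq_centralizer (hUsa : star U = U) (hUunit : U * U = 1)
    (M : Set (H →L[ℂ] H)) : twistedComm U M = Set.centralizer (twist U '' M) := by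
  rw [twistedComm, ← coe_twistAut hUsa hUunit, image_centralizer]

theorem twist_image_twistedComm (hUsa : star U = U) (hUunit : U * U = 1) {M : Set (H →L[ℂ] H)}
    (hM : (fun T : H →L[ℂ] H ↦ U * T * U) '' M = M) :
    twist U '' twistedComm U M = Set.centralizer M := by
  rw [twistedComm_eq_centralizer hUsa hUunit, ← coe_twistAut hUsa hUunit, image_centralizer,
    coe_twistAut, Set.image_image]
  simp only [twist_twist hUsa hUunit, hM]

theorem twistedComm_twistedComm (hUsa : star U = U) (hUunit : U * U = 1) {M : Set (H →L[ℂ] H)}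
    (hM : (fun T : H →L[ℂ] H ↦ U * T * U) '' M = M) :
    twistedComm U (twistedComm U M) = Set.centralizer (Set.centralizer M) := by
  rw [twistedComm_eq_centralizer hUsa hUunit, twist_image_twistedComm hUsa hUunit hM]

/-- The image `η_U(S)` of a `*`-algebra `S` under the twist. -/
def twistSubalgebra (hUsa : star U = U) (hUunit : U * U = 1)
    (S : StarSubalgebra ℂ (H →L[ℂ] H)) : StarSubalgebra ℂ (H →L[ℂ] H) :=
  S.map (StarAlgHomClass.toStarAlgHom (twistAut hUsa hUunit))

theorem coe_twistSubalgebra (hUsa : star U = U) (hUunit : U * U = 1)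
    (S : StarSubalgebra ℂ (H →L[ℂ] H)) :
    (twistSubalgebra hUsa hUunit S : Set (H →L[ℂ] H)) = twist U '' S := by
  rw [← coe_twistAut hUsa hUunit]
  rfl

theorem denseRange_orbitMap_twistSubalgebra (hUsa : star U = U) (hUunit : U * U = 1)
    {S : StarSubalgebra ℂ (H →L[ℂ] H)} {ξ : H}
    (h : Dense ((fun T : H →L[ℂ] H ↦ twist U T ξ) '' S)) :
    DenseRange (orbitMap (twistSubalgebra hUsa hUunit S) ξ) := by
  refine Dense.mono ?_ h
  rintro _ ⟨T, hT, rfl⟩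
  have hηT : twist U T ∈ twistSubalgebra hUsa hUunit S := by
    rw [← SetLike.mem_coe, coe_twistSubalgebra]
    exact Set.mem_image_of_mem _ hT
  exact ⟨⟨twist U T, hηT⟩, rfl⟩

theorem forall_mem_twistSubalgebra (hUsa : star U = U) (hUunit : U * U = 1)
    {S : StarSubalgebra ℂ (H →L[ℂ] H)} {p : (H →L[ℂ] H) → Prop} :
    (∀ R ∈ twistSubalgebra hUsa hUunit S, IsSelfAdjoint R → p R) ↔
      ∀ T ∈ S, IsSelfAdjoint T → p (twist U T) := by
  simp_rw [← SetLike.mem_coe, coe_twistSubalgebra, Set.forall_mem_image,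
    isSelfAdjoint_twist_iff hUsa hUunit]

theorem mem_selfAdjointOrbit_twistSubalgebra (hUsa : star U = U) (hUunit : U * U = 1)
    {S : StarSubalgebra ℂ (H →L[ℂ] H)} {ξ z : H} :
    z ∈ selfAdjointOrbit (twistSubalgebra hUsa hUunit S) ξ ↔
      ∃ T ∈ S, IsSelfAdjoint T ∧ z = twist U T ξ := by
  simp_rw [mem_selfAdjointOrbit, ← SetLike.mem_coe, coe_twistSubalgebra, Set.exists_mem_image,
    isSelfAdjoint_twist_iff hUsa hUunit]

section RealOrthogonal

attribute [local instance] InnerProductSpace.complexToReal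

theorem coe_orthogonal_selfAdjointOrbit_twistSubalgebra (hUsa : star U = U) (hUunit : U * U = 1)
    (S : StarSubalgebra ℂ (H →L[ℂ] H)) (ξ : H) :
    ((selfAdjointOrbit (twistSubalgebra hUsa hUunit S) ξ)ᗮ : Set H) =
      {x | ∀ T ∈ S, IsSelfAdjoint T → (⟪x, twist U T ξ⟫_ℂ).re = 0} := by
  ext x
  exact mem_orthogonal_selfAdjointOrbit.trans (forall_mem_twistSubalgebra hUsa hUunit)

theorem coe_selfAdjointOrbit_I_smul (S : StarSubalgebra ℂ (H →L[ℂ] H)) (ξ : H) :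
    (selfAdjointOrbit S (Complex.I • ξ) : Set H) =
      {z | ∃ R ∈ S, IsSelfAdjoint R ∧ z = Complex.I • R ξ} := by
  ext z
  simp only [SetLike.mem_coe, mem_selfAdjointOrbit, map_smul, Set.mem_ofPred]

theorem coe_selfAdjointOrbit_twistSubalgebra_sup (hUsa : star U = U) (hUunit : U * U = 1)
    (S R : StarSubalgebra ℂ (H →L[ℂ] H)) (ξ : H) :
    ((selfAdjointOrbit (twistSubalgebra hUsa hUunit S) ξ ⊔
        selfAdjointOrbit R (Complex.I • ξ) : Submodule ℝ H) : Set H) =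
      {z | ∃ T ∈ S, ∃ Q ∈ R, IsSelfAdjoint T ∧ IsSelfAdjoint Q ∧
        z = twist U T ξ + Complex.I • Q ξ} := by
  ext z
  rw [SetLike.mem_coe, Submodule.mem_sup]
  simp only [mem_selfAdjointOrbit_twistSubalgebra, mem_selfAdjointOrbit (D := R), map_smul]
  constructor
  · rintro ⟨_, ⟨T, hT, hTs, rfl⟩, _, ⟨Q, hQ, hQs, rfl⟩, rfl⟩
    exact ⟨T, hT, Q, hQ, hTs, hQs, rfl⟩
  · rintro ⟨T, hT, Q, hQ, hTs, hQs, rfl⟩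
    exact ⟨_, ⟨T, hT, hTs, rfl⟩, _, ⟨Q, hQ, hQs, rfl⟩, rfl⟩

theorem statement15_general (hUsa : star U = U) (hUunit : U * U = 1)
    (SA SB : StarSubalgebra ℂ (H →L[ℂ] H))
    (hSB : (fun T : H →L[ℂ] H ↦ U * T * U) '' SB = SB) (ξ : H)
    (hcyc : Dense ((fun T : H →L[ℂ] H ↦ twist U T ξ) '' SA))
    (hAB : (SA : Set (H →L[ℂ] H)) ⊆ twistedComm U SB) :
    [twistedComm U SA = twistedComm U (twistedComm U SB),
      Dense {z : H | ∃ T ∈ SA, ∃ R ∈ SB, IsSelfAdjoint T ∧ IsSelfAdjoint R ∧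
        z = twist U T ξ + Complex.I • (R ξ)},
      {x : H | ∀ T ∈ SA, IsSelfAdjoint T → (⟪x, twist U T ξ⟫_ℂ).re = 0} =
        closure {z : H | ∃ R ∈ SB, IsSelfAdjoint R ∧ z = Complex.I • (R ξ)}].TFAE := by
  have hcomm : (twistSubalgebra hUsa hUunit SA : Set (H →L[ℂ] H)) ⊆ Set.centralizer SB := by
    rw [coe_twistSubalgebra, ← twist_image_twistedComm hUsa hUunit hSB]
    exact Set.image_mono hAB
  have h := rieffelVanDaele_tfae (denseRange_orbitMap_twistSubalgebra hUsa hUunit hcyc) hcomm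
  rwa [← SetLike.coe_set_eq (p := (selfAdjointOrbit _ _)ᗮ), Submodule.topologicalClosure_coe,
    coe_orthogonal_selfAdjointOrbit_twistSubalgebra, coe_selfAdjointOrbit_I_smul,
    coe_selfAdjointOrbit_twistSubalgebra_sup, coe_twistSubalgebra,
    ← twistedComm_eq_centralizer hUsa hUunit, ← twistedComm_twistedComm hUsa hUunit hSB] at h

end RealOrthogonal

end Twist

/-- Lemma 4.2, a twisted Rieffel–van Daele lemma.  Let `(H, U)` be a
`ℤ₂`-graded Hilbert space, `SA, SB ⊆ B(H)` unital `*`-subalgebras invariant under `ad U`,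
`ξ` an even vector cyclic for `SA`, and suppose `SA ⊆ SB^≀`.  Then the following are
equivalent: (1) `SA^≀ = SB^≀≀`; (2) `η_U((SA)_s) ξ + i (SB)_s ξ` is dense in `H`;
(3) the real orthogonal complement of `η_U((SA)_s) ξ` is the closure of `i (SB)_s ξ`. -/
theorem statement15 {H : Type*} [NormedAddCommGroup H] [InnerProductSpace ℂ H]
    [CompleteSpace H]
    (U : H →L[ℂ] H) (hUsa : star U = U) (hUunit : U * U = 1)
    (SA SB : StarSubalgebra ℂ (H →L[ℂ] H))
    (hSA : (fun T : H →L[ℂ] H => U * T * U) '' SA = SA)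
    (hSB : (fun T : H →L[ℂ] H => U * T * U) '' SB = SB)
    (ξ : H) (hξ : U ξ = ξ)
    (hcyc : Dense ((fun T : H →L[ℂ] H => T ξ) '' SA))
    (hAB : (SA : Set (H →L[ℂ] H)) ⊆ twistedComm U SB) :
    (twistedComm U SA = twistedComm U (twistedComm U SB) ↔
      Dense {z : H | ∃ T ∈ SA, ∃ R ∈ SB, IsSelfAdjoint T ∧ IsSelfAdjoint R ∧
        z = twist U T ξ + Complex.I • (R ξ)}) ∧
    (twistedComm U SA = twistedComm U (twistedComm U SB) ↔
      {x : H | ∀ T ∈ SA, IsSelfAdjoint T → (⟪x, twist U T ξ⟫_ℂ).re = 0} =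
        closure {z : H | ∃ R ∈ SB, IsSelfAdjoint R ∧ z = Complex.I • (R ξ)}) :=
  have h := statement15_general hUsa hUunit SA SB hSB ξ (dense_twist_apply hUsa hUunit hξ hcyc) hAB
  ⟨h.out 0 1, h.out 0 2⟩

end
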